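/- Let μ be a σ-finite measure on a measurable space Y and let {f(·;θ) : θ ∈ Θ} be a complete family of probability density functions on Y with respect to μ. Let z ⊆ Y be a measurable set and let κ : Y → ℝ be a bounded measurable function. Then the following are equivalent: (i) [likelihood ignorability at z] there exists w ∈ ℝ such that for all θ ∈ Θ, ∫_z κ(y) f(y;θ) dμ(y) = w · ∫_z f(y;θ) dμ(y); (ii) [coarsening at random at z, up to null sets] there exists w ∈ ℝ such that for every θ ∈ Θ, κ(y)·f(y;θ) = w·f(y;θ) for μ-almost every y ∈ z. -/

import Mathlib

open MeasureTheory

/-!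
Completeness passes to the restriction of `μ` to `z`: a test function on `z`, extended by zero, is
a test function for `μ`. Ignorability with weight `w` says that `κ - w` integrates to zero over `z`
against every density, so by completeness of the restricted family `(κ - w) * f θ` vanishes almost
everywhere on `z`.
-/

section CompleteFamily

variable {Y Θ 𝕜 : Type*} [MeasurableSpace Y] [RCLike 𝕜] {μ : Measure Y} {f : Θ → Y → 𝕜}

/-- Completeness, in the sense of statistics, of a family of densities `f θ` with respect to `μ`.
The members are not required to be probability densities, so that completeness can be restricted
to a subset of the sample space. -/
def IsCompleteFamily (μ : Measure Y) (f : Θ → Y → 𝕜) : Prop :=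
  ∀ t : Y → 𝕜, Measurable t →
    (∀ θ, Integrable (fun y => t y * f θ y) μ) →
    (∀ θ, ∫ y, t y * f θ y ∂μ = 0) →
    ∀ θ, ∀ᵐ y ∂μ, t y * f θ y = 0

namespace IsCompleteFamily

theorem restrict (hf : IsCompleteFamily μ f) {z : Set Y} (hz : MeasurableSet z) :
    IsCompleteFamily (μ.restrict z) f := by
  intro t ht ht_int ht_zero θ
  have indicator_mul (θ : Θ) :
      (fun y => z.indicator t y * f θ y) = z.indicator fun y => t y * f θ y :=
    funext fun _ => (Set.indicator_mul_left z t (f θ)).symm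
  have indicator_ae_zero : ∀ᵐ y ∂μ, z.indicator t y * f θ y = 0 := by
    refine hf (z.indicator t) (ht.indicator hz) (fun θ => ?_) (fun θ => ?_) θ
    · rw [indicator_mul]
      exact (integrable_indicator_iff hz).2 (ht_int θ)
    · rw [indicator_mul, integral_indicator hz, ht_zero]
  rw [ae_restrict_iff' hz]
  filter_upwards [indicator_ae_zero] with y hy hyz
  rwa [Set.indicator_of_mem hyz] at hy

theorem forall_integral_mul_eq_iff (hf : IsCompleteFamily μ f) {g h : Y → 𝕜}
    (hg : Measurable g) (hh : Measurable h)
    (hgf : ∀ θ, Integrable (fun y => g y * f θ y) μ)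
    (hhf : ∀ θ, Integrable (fun y => h y * f θ y) μ) :
    (∀ θ, ∫ y, g y * f θ y ∂μ = ∫ y, h y * f θ y ∂μ) ↔
      ∀ θ, ∀ᵐ y ∂μ, g y * f θ y = h y * f θ y := by
  refine ⟨fun h_eq θ => ?_, fun h_ae θ => integral_congr_ae (h_ae θ)⟩
  have sub_mul_ae_zero : ∀ᵐ y ∂μ, (g y - h y) * f θ y = 0 := by
    refine hf (fun y => g y - h y) (hg.sub hh) (fun θ => ?_) (fun θ => ?_) θ
    · simp only [sub_mul]
      exact (hgf θ).sub (hhf θ)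
    · simp only [sub_mul]
      rw [integral_sub (hgf θ) (hhf θ), h_eq θ, sub_self]
  filter_upwards [sub_mul_ae_zero] with y hy
  rwa [sub_mul, sub_eq_zero] at hy

end IsCompleteFamily

theorem car_iff_lig_general (hf : IsCompleteFamily μ f) {z : Set Y} (hz : MeasurableSet z)
    {κ : Y → 𝕜} (hκ : Measurable κ) (hf_int : ∀ θ, IntegrableOn (f θ) z μ)
    (hκf_int : ∀ θ, IntegrableOn (fun y => κ y * f θ y) z μ) (w : 𝕜) :
    (∀ θ, ∫ y in z, κ y * f θ y ∂μ = w * ∫ y in z, f θ y ∂μ) ↔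
      ∀ θ, ∀ᵐ y ∂μ, y ∈ z → κ y * f θ y = w * f θ y := by
  simp only [← integral_const_mul, ← ae_restrict_iff' hz]
  exact (hf.restrict hz).forall_integral_mul_eq_iff hκ measurable_const hκf_int
    fun θ => (hf_int θ).const_mul w

end CompleteFamily

/-- **Theorem 4.1** (Lu–Copas), stated for a fixed observed coarse set `z`: for a complete
family, likelihood ignorability at `z` is equivalent to coarsening at random at `z`. -/
theorem car_iff_lig
    {Y : Type*} [MeasurableSpace Y] (μ : Measure Y) [SigmaFinite μ]
    {Θ : Type*} (f : Θ → Y → ℝ)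
    (hf_meas : ∀ θ, Measurable (f θ))
    (hf_nonneg : ∀ θ y, 0 ≤ f θ y)
    (hf_int : ∀ θ, ∫ y, f θ y ∂μ = 1)
    -- completeness of the family {f(·;θ) : θ ∈ Θ}
    (hf_complete : ∀ t : Y → ℝ, Measurable t →
      (∀ θ, Integrable (fun y => t y * f θ y) μ) →
      (∀ θ, ∫ y, t y * f θ y ∂μ = 0) →
      ∀ θ, ∀ᵐ y ∂μ, t y * f θ y = 0)
    (z : Set Y) (hz : MeasurableSet z)
    (κ : Y → ℝ) (hκ_meas : Measurable κ) (hκ_bdd : ∃ C : ℝ, ∀ y, |κ y| ≤ C) :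
    -- (i) LIG at z  ↔  (ii) CAR at z (up to null sets)
    (∃ w : ℝ, ∀ θ, ∫ y in z, κ y * f θ y ∂μ = w * ∫ y in z, f θ y ∂μ)
      ↔
    (∃ w : ℝ, ∀ θ, ∀ᵐ y ∂μ, y ∈ z → κ y * f θ y = w * f θ y) := by
  obtain ⟨C, hC⟩ := hκ_bdd
  have hfi (θ : Θ) : Integrable (f θ) μ := .of_integral_ne_zero (by simp [hf_int θ])
  have hκfi (θ : Θ) : Integrable (fun y => κ y * f θ y) μ :=
    (hfi θ).bdd_mul hκ_meas.aestronglyMeasurable (.of_forall hC)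
  exact exists_congr <| car_iff_lig_general hf_complete hz hκ_meas
    (fun θ => (hfi θ).integrableOn) fun θ => (hκfi θ).integrableOn
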